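/- For every real number q with 0 < q < 1, the function q ↦ (1/4)·(1 + k(q)^2)/(1 − k(q)^2) is differentiable at q with derivative equal to q · E(q)^3 E(q^{10})^8 / E(q^5)^7. -/

import Mathlib

open Real

/-- Euler's product `E(q) = ∏_{j=1}^∞ (1 - q^j)`. -/
noncomputable def eulerE (q : ℝ) : ℝ := ∏' j : ℕ, (1 - q ^ (j + 1))

/-- Ramanujan's level-10 function `k(q)`. -/
noncomputable def ramK (q : ℝ) : ℝ :=
  q * ∏' j : ℕ,
    ((1 - q ^ (10 * j + 1)) * (1 - q ^ (10 * j + 2)) * (1 - q ^ (10 * j + 8)) *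
        (1 - q ^ (10 * j + 9))) /
      ((1 - q ^ (10 * j + 3)) * (1 - q ^ (10 * j + 4)) * (1 - q ^ (10 * j + 6)) *
        (1 - q ^ (10 * j + 7)))

/-!
The theorem is the product of two evaluations in terms of `E`. Writing `k = k(q)`, the derivative of
`(1 + k²) / (4 (1 - k²))` is `(k / (1 - k²))² · k' / k`, where

* `k / (1 - k²) = q E(q) E(q¹⁰)⁵ / (E(q²) E(q⁵)⁵)`, because `1 - k²` factors into theta functions
  `θ(qⁱ; q¹⁰)` by an instance of Weierstrass's three-term relation;
* `q k' / k = E(q) E(q²)² E(q⁵)³ / E(q¹⁰)²`. The left-hand side is a Lambert series whose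
  coefficients are, up to sign, the quadratic character modulo `5`. Its Gauss sum turns the series
  into a difference `℘(x) - ℘(u)` at negatives of fifth roots of unity, and differentiating the
  three-term relation writes `℘(x) - ℘(u)` as a product of theta functions.

The three-term relation follows from the Jacobi triple product: splitting the double series
`θ(xy) θ(x/y)` by parity expresses it as a `2 × 2` determinant, and the three terms are those of the
Plücker relation. The triple product is the limit of its finite form, proved by induction.
-/

open Filter Topology Finset Polynomial

section Regrouping

@[to_additive]
lemma hasProd_prod_fin_of_hasProd {M : Type*} [CommMonoid M] [TopologicalSpace M] [ContinuousMul M]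
    [RegularSpace M] {f : ℕ → M} {a : M} (hf : HasProd f a) (m : ℕ) [NeZero m] :
    HasProd (fun j ↦ ∏ i : Fin m, f (m * j + i)) a := by
  refine ((Nat.divModEquiv m).symm.hasProd_iff.mpr hf).prod_fiberwise fun j ↦ ?_
  simpa [Nat.divModEquiv, mul_comm, add_comm] using
    hasProd_fintype fun i : Fin m ↦ f (m * j + i)

lemma hasSum_of_hasSum_even_of_hasSum_odd {G : Type*} [AddCommMonoid G] [TopologicalSpace G]
    [ContinuousAdd G] {F : ℤ × ℤ → G} {a b : G}
    (heven : HasSum (fun p : ℤ × ℤ ↦ F (p.1 + 1 + p.2, p.1 + 1 - p.2)) a)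
    (hodd : HasSum (fun p : ℤ × ℤ ↦ F (p.1 + p.2 + 1, p.1 - p.2)) b) : HasSum F (a + b) := by
  let even : ℤ × ℤ → ℤ × ℤ := fun p ↦ (p.1 + 1 + p.2, p.1 + 1 - p.2)
  let odd : ℤ × ℤ → ℤ × ℤ := fun p ↦ (p.1 + p.2 + 1, p.1 - p.2)
  have even_injective : Function.Injective even := by
    rintro ⟨i, j⟩ ⟨k, l⟩ h
    simp only [even, Prod.mk.injEq] at h ⊢
    omega
  have odd_injective : Function.Injective odd := by
    rintro ⟨i, j⟩ ⟨k, l⟩ h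
    simp only [odd, Prod.mk.injEq] at h ⊢
    omega
  have isCompl : IsCompl (Set.range even) (Set.range odd) := by
    rw [← compl_eq_iff_isCompl]
    ext ⟨m, n⟩
    simp only [Set.mem_compl_iff, Set.mem_range, even, odd, Prod.exists, Prod.mk.injEq]
    constructor
    · intro h
      rcases Int.even_or_odd' (m + n) with ⟨k, hk | hk⟩
      · exact absurd ⟨k - 1, m - k, by omega, by omega⟩ h
      · exact ⟨k, m - k - 1, by omega, by omega⟩
    · rintro ⟨i, j, h₁, h₂⟩ ⟨k, l, h₃, h₄⟩
      omega
  exact HasSum.add_isCompl isCompl (even_injective.hasSum_range_iff.mpr heven)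
    (odd_injective.hasSum_range_iff.mpr hodd)

end Regrouping

section QPochhammer

variable {𝕜 : Type*} [NormedField 𝕜] {a q : 𝕜}

/-- The infinite `q`-Pochhammer symbol `(a; q)_∞`; the product converges for `‖q‖ < 1`. -/
noncomputable def qPochhammer (a q : 𝕜) : 𝕜 := ∏' n : ℕ, (1 - a * q ^ n)

/-- The finite `q`-Pochhammer symbol `(a; q)_n`. -/
def qPochhammerFin (a q : 𝕜) (n : ℕ) : 𝕜 := ∏ i ∈ range n, (1 - a * q ^ i)

lemma norm_pow_lt_one (hq : ‖q‖ < 1) {m : ℕ} (hm : m ≠ 0) : ‖q ^ m‖ < 1 := by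
  rw [norm_pow]
  exact pow_lt_one₀ (norm_nonneg q) hq hm

lemma one_sub_ne_zero_of_norm_lt_one (ha : ‖a‖ < 1) : 1 - a ≠ 0 := by
  refine sub_ne_zero.mpr ?_
  rintro rfl
  simp at ha

lemma norm_mul_pow_lt_one (ha : ‖a‖ < 1) (hq : ‖q‖ < 1) (n : ℕ) : ‖a * q ^ n‖ < 1 := by
  rw [norm_mul, norm_pow]
  exact mul_lt_one_of_nonneg_of_lt_one_left (norm_nonneg a) ha (pow_le_one₀ (norm_nonneg q) hq.le)

lemma summable_norm_mul_pow (a : 𝕜) (hq : ‖q‖ < 1) : Summable fun n : ℕ ↦ ‖a * q ^ n‖ := by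
  simpa only [norm_mul] using (summable_norm_geometric_of_norm_lt_one hq).mul_left ‖a‖

variable [CompleteSpace 𝕜]

lemma hasProd_tprod_one_sub {b : ℕ → 𝕜} (hb : Summable fun n ↦ ‖b n‖) :
    HasProd (fun n ↦ 1 - b n) (∏' n, (1 - b n)) := by
  simp only [sub_eq_add_neg]
  exact (multipliable_one_add_of_summable (by simpa only [norm_neg] using hb)).hasProd

lemma hasProd_qPochhammer (a : 𝕜) (hq : ‖q‖ < 1) :
    HasProd (fun n : ℕ ↦ 1 - a * q ^ n) (qPochhammer a q) :=
  hasProd_tprod_one_sub (summable_norm_mul_pow a hq)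

lemma tendsto_qPochhammerFin (a : 𝕜) (hq : ‖q‖ < 1) :
    Tendsto (qPochhammerFin a q) atTop (𝓝 (qPochhammer a q)) :=
  (hasProd_qPochhammer a hq).tendsto_prod_nat

lemma qPochhammer_ne_zero_iff (hq : ‖q‖ < 1) :
    qPochhammer a q ≠ 0 ↔ ∀ n : ℕ, 1 - a * q ^ n ≠ 0 := by
  refine ⟨fun h n hn ↦ h (tprod_of_exists_eq_zero ⟨n, hn⟩), fun h ↦ ?_⟩
  simp only [qPochhammer, sub_eq_add_neg] at h ⊢
  exact tprod_one_add_ne_zero_of_summable h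
    (by simpa only [norm_neg] using summable_norm_mul_pow a hq)

lemma qPochhammer_ne_zero (ha : ‖a‖ < 1) (hq : ‖q‖ < 1) : qPochhammer a q ≠ 0 :=
  (qPochhammer_ne_zero_iff hq).mpr fun n ↦
    one_sub_ne_zero_of_norm_lt_one (norm_mul_pow_lt_one ha hq n)

lemma qPochhammer_eq_one_sub_mul (a : 𝕜) (hq : ‖q‖ < 1) :
    qPochhammer a q = (1 - a) * qPochhammer (a * q) q := by
  have htail : HasProd (fun n : ℕ ↦ 1 - a * q ^ (n + 1)) (qPochhammer (a * q) q) := by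
    simpa only [pow_succ', mul_assoc] using hasProd_qPochhammer (a * q) hq
  simpa using (hasProd_qPochhammer a hq).unique (htail.zero_mul (f := fun n ↦ 1 - a * q ^ n))

lemma qPochhammer_eq_prod_residues (a : 𝕜) (hq : ‖q‖ < 1) (m : ℕ) [NeZero m] :
    qPochhammer a q = ∏ i : Fin m, qPochhammer (a * q ^ (i : ℕ)) (q ^ m) := by
  have hresidues := hasProd_prod (s := univ) fun (i : Fin m) _ ↦
    hasProd_qPochhammer (a * q ^ (i : ℕ)) (norm_pow_lt_one hq (NeZero.ne m))
  refine (hasProd_prod_fin_of_hasProd (hasProd_qPochhammer a hq) m).unique ?_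
  convert hresidues using 4 with j i
  rw [pow_add, pow_mul]
  ring

lemma prod_qPochhammer_pow_mul {ζ : 𝕜} {n : ℕ} (hζ : IsPrimitiveRoot ζ n) (hn : 0 < n)
    (hq : ‖q‖ < 1) (a : 𝕜) :
    ∏ i ∈ range n, qPochhammer (ζ ^ i * a) q = qPochhammer (a ^ n) (q ^ n) := by
  have hcyclotomic (y : 𝕜) : ∏ i ∈ range n, (1 - ζ ^ i * y) = 1 - y ^ n := by
    simpa [eval_prod] using (congrArg (eval 1) (X_pow_sub_C_eq_prod hζ hn (α := y) rfl)).symm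
  refine (hasProd_prod fun i (_ : i ∈ range n) ↦ hasProd_qPochhammer (ζ ^ i * a) hq).unique ?_
  convert hasProd_qPochhammer (a ^ n) (norm_pow_lt_one hq hn.ne') using 2 with j
  simp only [mul_assoc, hcyclotomic, mul_pow, pow_right_comm]

end QPochhammer

section JacobiTripleProduct

variable {𝕜 : Type*} [NormedField 𝕜] {q x : 𝕜}

/-- The `j`-th term `(-1)^j q^{j(j-1)/2} x^j` of the bilateral series in the Jacobi triple
product. -/
def jacobiTerm (q x : 𝕜) (j : ℤ) : 𝕜 := (-1) ^ j * q ^ (j * (j - 1) / 2) * x ^ j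

/-- The bilateral theta series `∑ (-1)^j q^{j(j-1)/2} x^j`. -/
noncomputable def jacobiSeries (q x : 𝕜) : 𝕜 := ∑' j : ℤ, jacobiTerm q x j

lemma jacobiTerm_ne_zero (hq₀ : q ≠ 0) (hx : x ≠ 0) (j : ℤ) : jacobiTerm q x j ≠ 0 :=
  mul_ne_zero (mul_ne_zero (zpow_ne_zero _ (neg_ne_zero.mpr one_ne_zero)) (zpow_ne_zero _ hq₀))
    (zpow_ne_zero _ hx)

lemma jacobiTerm_add_one (hq₀ : q ≠ 0) (hx : x ≠ 0) (j : ℤ) :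
    jacobiTerm q x (j + 1) = -(x * q ^ j) * jacobiTerm q x j := by
  have hexp : (j + 1) * (j + 1 - 1) / 2 = j * (j - 1) / 2 + j := by
    rw [← Int.add_mul_ediv_right _ _ two_ne_zero]
    ring_nf
  rw [jacobiTerm, jacobiTerm, hexp, zpow_add₀ hq₀, zpow_add_one₀ hx,
    zpow_add_one₀ (neg_ne_zero.mpr one_ne_zero)]
  ring

lemma jacobiTerm_neg (hq₀ : q ≠ 0) (j : ℤ) : jacobiTerm q x (-j) = jacobiTerm q (q / x) j := by
  have hexp : -j * (-j - 1) / 2 = j * (j - 1) / 2 + j := by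
    rw [← Int.add_mul_ediv_right _ _ two_ne_zero]
    ring_nf
  rw [jacobiTerm, jacobiTerm, hexp, zpow_add₀ hq₀, div_zpow, zpow_neg x, zpow_neg (-1), ← inv_zpow,
    inv_neg_one]
  ring

lemma two_mul_self_mul_sub_one_div_two (m : ℤ) : 2 * (m * (m - 1) / 2) = m * (m - 1) :=
  Int.mul_ediv_cancel' (Int.even_mul_pred_self m).two_dvd

lemma jacobiTerm_sq_neg (q x : 𝕜) (j : ℤ) :
    jacobiTerm (q ^ 2) (-x) j = q ^ (j * (j - 1)) * x ^ j := by
  have hsign : (-1 : 𝕜) ^ j * (-1) ^ j = 1 := by rw [← mul_zpow]; simp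
  have hexp : (q ^ 2) ^ (j * (j - 1) / 2) = q ^ (j * (j - 1)) := by
    rw [← zpow_natCast, ← zpow_mul, Nat.cast_ofNat, two_mul_self_mul_sub_one_div_two]
  rw [jacobiTerm, hexp, ← neg_one_mul x, mul_zpow]
  linear_combination q ^ (j * (j - 1)) * x ^ j * hsign

/-- The reciprocal `1 / (q; q)_m` of a finite `q`-Pochhammer symbol. It is set to `0` for `m < 0`,
so that the recurrence in `m` holds for all integers. -/
noncomputable def qPochhammerRecip (q : 𝕜) (m : ℤ) : 𝕜 :=
  if m < 0 then 0 else (qPochhammerFin q q m.toNat)⁻¹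

lemma qPochhammerRecip_sub_one (hq : ‖q‖ < 1) (m : ℤ) :
    qPochhammerRecip q (m - 1) = (1 - q ^ m) * qPochhammerRecip q m := by
  rcases lt_trichotomy m 0 with hm | rfl | hm
  · simp [qPochhammerRecip, hm, show m - 1 < 0 by omega]
  · simp [qPochhammerRecip]
  · obtain ⟨n, rfl⟩ : ∃ n : ℕ, m = n + 1 := ⟨(m - 1).toNat, by omega⟩
    have hfactor : 1 - q * q ^ n ≠ 0 :=
      one_sub_ne_zero_of_norm_lt_one (norm_mul_pow_lt_one hq hq n)
    have hpow : q ^ ((n : ℤ) + 1) = q * q ^ n := by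
      rw [← pow_succ', ← zpow_natCast, Nat.cast_succ]
    rw [qPochhammerRecip, qPochhammerRecip, if_neg (by omega), if_neg (by omega),
      add_sub_cancel_right, Int.toNat_natCast, Int.toNat_natCast_add_one, hpow, qPochhammerFin,
      qPochhammerFin, prod_range_succ, mul_inv, mul_left_comm, mul_inv_cancel₀ hfactor, mul_one]

/-- The central Gaussian binomial coefficient `[2n choose n + j]_q`. -/
noncomputable def centralGaussBinom (q : 𝕜) (n : ℕ) (j : ℤ) : 𝕜 :=
  qPochhammerFin q q (2 * n) * qPochhammerRecip q (n - j) * qPochhammerRecip q (n + j)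

lemma centralGaussBinom_zero (q : 𝕜) (j : ℤ) :
    centralGaussBinom q 0 j = if j = 0 then 1 else 0 := by
  rcases lt_trichotomy j 0 with hj | rfl | hj
  · simp [centralGaussBinom, qPochhammerRecip, hj, hj.ne]
  · simp [centralGaussBinom, qPochhammerRecip, qPochhammerFin]
  · simp [centralGaussBinom, qPochhammerRecip, hj, hj.ne']

lemma centralGaussBinom_succ (hq₀ : q ≠ 0) (hq : ‖q‖ < 1) (n : ℕ) (j : ℤ) :
    centralGaussBinom q (n + 1) j = (1 + q ^ (2 * n + 1)) * centralGaussBinom q n j +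
      q ^ ((n : ℤ) + 1 - j) * centralGaussBinom q n (j - 1) +
      q ^ ((n : ℤ) + 1 + j) * centralGaussBinom q n (j + 1) := by
  have hrecip (m l : ℤ) (h : m = l + 1) :
      qPochhammerRecip q l = (1 - q ^ m) * qPochhammerRecip q m := by
    rw [← qPochhammerRecip_sub_one hq, h, add_sub_cancel_right]
  have hminus : q ^ ((n : ℤ) + 1 - j) = q * q ^ ((n : ℤ) - j) := by
    rw [← zpow_one_add₀ hq₀]; ring_nf
  have hplus : q ^ ((n : ℤ) + 1 + j) = q * q ^ ((n : ℤ) + j) := by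
    rw [← zpow_one_add₀ hq₀]; ring_nf
  have hdouble : q ^ (2 * n) = q ^ ((n : ℤ) - j) * q ^ ((n : ℤ) + j) := by
    rw [← zpow_add₀ hq₀, ← zpow_natCast]; push_cast; ring_nf
  have hfactorial : qPochhammerFin q q (2 * (n + 1)) =
      qPochhammerFin q q (2 * n) * (1 - q * q ^ (2 * n)) * (1 - q * (q ^ (2 * n) * q)) := by
    rw [mul_add_one, qPochhammerFin, prod_range_succ, prod_range_succ, ← qPochhammerFin, pow_succ]
  simp only [centralGaussBinom, Nat.cast_succ]
  rw [hrecip (n - j) (n - (j + 1)) (by ring), hrecip (n + j) (n + (j - 1)) (by ring),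
    hrecip (n + 1 - j) (n - j) (by ring), hrecip (n + 1 + j) (n + j) (by ring), hfactorial,
    show (n : ℤ) - (j - 1) = n + 1 - j by ring, show (n : ℤ) + (j + 1) = n + 1 + j by ring,
    pow_succ, hdouble, hminus, hplus]
  ring

lemma hasSum_centralGaussBinom_mul_jacobiTerm (hq₀ : q ≠ 0) (hq : ‖q‖ < 1) (hx : x ≠ 0) (n : ℕ) :
    HasSum (fun j : ℤ ↦ centralGaussBinom q n j * jacobiTerm q x j)
      (qPochhammerFin x q n * qPochhammerFin (q / x) q n) := by
  induction n with
  | zero =>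
    convert hasSum_single (0 : ℤ) fun j hj ↦ ?_ using 1
    · simp [centralGaussBinom_zero, qPochhammerFin, jacobiTerm]
    · simp [centralGaussBinom_zero, hj]
  | succ n ih =>
    have hshift_down := (Equiv.subRight (1 : ℤ)).hasSum_iff.mpr ih
    have hshift_up := (Equiv.addRight (1 : ℤ)).hasSum_iff.mpr ih
    have hvalue : qPochhammerFin x q (n + 1) * qPochhammerFin (q / x) q (n + 1) =
        (1 + q ^ (2 * n + 1) + -(x * q ^ n) + -(q ^ (n + 1) / x)) *
          (qPochhammerFin x q n * qPochhammerFin (q / x) q n) := by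
      simp only [qPochhammerFin, prod_range_succ]
      field_simp
      ring
    rw [hvalue, add_mul, add_mul]
    refine (((ih.mul_left (1 + q ^ (2 * n + 1))).add (hshift_down.mul_left (-(x * q ^ n)))).add
      (hshift_up.mul_left (-(q ^ (n + 1) / x)))).congr_fun fun j ↦ ?_
    have hterm_down : q ^ ((n : ℤ) + 1 - j) * jacobiTerm q x j =
        -(x * q ^ n) * jacobiTerm q x (j - 1) := by
      have hpow : q ^ n = q ^ ((n : ℤ) + 1 - j) * q ^ (j - 1) := by
        rw [← zpow_add₀ hq₀, ← zpow_natCast]; ring_nf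
      have hterm := jacobiTerm_add_one hq₀ hx (j - 1)
      rw [sub_add_cancel] at hterm
      rw [hterm, hpow]
      ring
    have hterm_up : q ^ ((n : ℤ) + 1 + j) * jacobiTerm q x j =
        -(q ^ (n + 1) / x) * jacobiTerm q x (j + 1) := by
      rw [jacobiTerm_add_one hq₀ hx, zpow_add₀ hq₀, ← zpow_natCast, Nat.cast_succ]
      field_simp
    simp only [Function.comp, Equiv.subRight_apply, Equiv.coe_addRight,
      centralGaussBinom_succ hq₀ hq]
    linear_combination centralGaussBinom q n (j - 1) * hterm_down +
      centralGaussBinom q n (j + 1) * hterm_up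

lemma summable_norm_jacobiTerm_natCast (hq₀ : q ≠ 0) (hq : ‖q‖ < 1) (hx : x ≠ 0) :
    Summable fun n : ℕ ↦ ‖jacobiTerm q x n‖ := by
  have hratio : Tendsto (fun n : ℕ ↦ ‖x‖ * ‖q‖ ^ n) atTop (𝓝 0) := by
    simpa using (tendsto_pow_atTop_nhds_zero_of_lt_one (norm_nonneg q) hq).const_mul ‖x‖
  refine summable_of_ratio_test_tendsto_lt_one zero_lt_one
    (.of_forall fun n ↦ norm_ne_zero_iff.mpr (jacobiTerm_ne_zero hq₀ hx n))
    (hratio.congr fun n ↦ ?_)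
  rw [Nat.cast_succ, jacobiTerm_add_one hq₀ hx, norm_norm, norm_norm, norm_mul,
    mul_div_cancel_right₀ _ (norm_ne_zero_iff.mpr (jacobiTerm_ne_zero hq₀ hx n)), zpow_natCast,
    norm_neg, norm_mul, norm_pow]

lemma summable_norm_jacobiTerm (hq₀ : q ≠ 0) (hq : ‖q‖ < 1) (hx : x ≠ 0) :
    Summable fun j : ℤ ↦ ‖jacobiTerm q x j‖ := by
  refine .of_nat_of_neg (summable_norm_jacobiTerm_natCast hq₀ hq hx) ?_
  simp only [jacobiTerm_neg hq₀]
  exact summable_norm_jacobiTerm_natCast hq₀ hq (div_ne_zero hq₀ hx)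

variable [CompleteSpace 𝕜]

lemma tendsto_qPochhammerFin_self_inv (hq : ‖q‖ < 1) :
    Tendsto (fun n ↦ (qPochhammerFin q q n)⁻¹) atTop (𝓝 (qPochhammer q q)⁻¹) :=
  (tendsto_qPochhammerFin q hq).inv₀ (qPochhammer_ne_zero hq hq)

lemma tendsto_qPochhammerRecip (hq : ‖q‖ < 1) :
    Tendsto (qPochhammerRecip q) atTop (𝓝 (qPochhammer q q)⁻¹) := by
  have htoNat : Tendsto Int.toNat atTop atTop :=
    tendsto_atTop.mpr fun b ↦ (eventually_ge_atTop (b : ℤ)).mono fun m hm ↦ by omega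
  refine ((tendsto_qPochhammerFin_self_inv hq).comp htoNat).congr' ?_
  filter_upwards [eventually_ge_atTop 0] with m hm
  rw [qPochhammerRecip, if_neg hm.not_gt, Function.comp_apply]

lemma tendsto_centralGaussBinom (hq : ‖q‖ < 1) (j : ℤ) :
    Tendsto (fun n ↦ centralGaussBinom q n j) atTop (𝓝 (qPochhammer q q)⁻¹) := by
  have hrecip (i : ℤ) : Tendsto (fun n : ℕ ↦ qPochhammerRecip q (n + i)) atTop
      (𝓝 (qPochhammer q q)⁻¹) :=
    (tendsto_qPochhammerRecip hq).comp
      (tendsto_atTop_add_const_right _ i tendsto_natCast_atTop_atTop)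
  have hdouble : Tendsto (fun n : ℕ ↦ 2 * n) atTop atTop :=
    tendsto_id.const_mul_atTop' two_pos
  have hprod := (((tendsto_qPochhammerFin q hq).comp hdouble).mul (hrecip (-j))).mul (hrecip j)
  rwa [mul_inv_cancel₀ (qPochhammer_ne_zero hq hq), one_mul] at hprod

lemma exists_norm_centralGaussBinom_le (hq : ‖q‖ < 1) :
    ∃ C, ∀ n j, ‖centralGaussBinom q n j‖ ≤ C := by
  obtain ⟨A, hA⟩ := (Metric.isBounded_range_of_tendsto _
    (tendsto_qPochhammerFin q hq)).exists_norm_le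
  obtain ⟨B, hB⟩ := (Metric.isBounded_range_of_tendsto _
    (tendsto_qPochhammerFin_self_inv hq)).exists_norm_le
  rw [Set.forall_mem_range] at hA hB
  have hA₀ : 0 ≤ A := (norm_nonneg _).trans (hA 0)
  have hB₀ : 0 ≤ B := (norm_nonneg _).trans (hB 0)
  have hrecip (m : ℤ) : ‖qPochhammerRecip q m‖ ≤ B := by
    rw [qPochhammerRecip]
    split_ifs
    · rwa [norm_zero]
    · exact hB _
  refine ⟨A * B * B, fun n j ↦ ?_⟩
  rw [centralGaussBinom, norm_mul, norm_mul]
  gcongr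
  exacts [hA _, hrecip _, hrecip _]

/-- The multiplicative theta function `θ(x; q) = (x; q)_∞ (q/x; q)_∞`. -/
noncomputable def qTheta (x q : 𝕜) : 𝕜 := qPochhammer x q * qPochhammer (q / x) q

-- Let `n → ∞` in the finite version, by dominated convergence.
theorem jacobiSeries_eq_qPochhammer_mul_qTheta (hq₀ : q ≠ 0) (hq : ‖q‖ < 1) (hx : x ≠ 0) :
    jacobiSeries q x = qPochhammer q q * qTheta x q := by
  obtain ⟨C, hC⟩ := exists_norm_centralGaussBinom_le hq
  have hseries : Tendsto (fun n ↦ ∑' j : ℤ, centralGaussBinom q n j * jacobiTerm q x j) atTop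
      (𝓝 (∑' j : ℤ, (qPochhammer q q)⁻¹ * jacobiTerm q x j)) := by
    refine tendsto_tsum_of_dominated_convergence
      ((summable_norm_jacobiTerm hq₀ hq hx).mul_left C)
      (fun j ↦ (tendsto_centralGaussBinom hq j).mul_const _) (.of_forall fun n j ↦ ?_)
    rw [norm_mul]
    gcongr
    exact hC n j
  have hproduct : Tendsto (fun n ↦ qPochhammerFin x q n * qPochhammerFin (q / x) q n) atTop
      (𝓝 (qTheta x q)) :=
    (tendsto_qPochhammerFin x hq).mul (tendsto_qPochhammerFin (q / x) hq)
  have hlimit := tendsto_nhds_unique (hseries.congr fun n ↦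
    (hasSum_centralGaussBinom_mul_jacobiTerm hq₀ hq hx n).tsum_eq) hproduct
  rw [← hlimit, tsum_mul_left, mul_inv_cancel_left₀ (qPochhammer_ne_zero hq hq), jacobiSeries]

end JacobiTripleProduct

section Theta

variable {𝕜 : Type*} [NormedField 𝕜] {q x y u v : 𝕜}

lemma qTheta_div_self (hq₀ : q ≠ 0) (x : 𝕜) : qTheta (q / x) q = qTheta x q := by
  rw [qTheta, qTheta, div_div_cancel₀ hq₀, mul_comm]

lemma jacobiTerm_mul_jacobiTerm (hq₀ : q ≠ 0) (hx : x ≠ 0) (hy : y ≠ 0) (m n : ℤ) :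
    jacobiTerm q (x * y) m * jacobiTerm q (x / y) n =
      (-1) ^ (m + n) * q ^ (m * (m - 1) / 2 + n * (n - 1) / 2) * x ^ (m + n) * y ^ (m - n) := by
  rw [jacobiTerm, jacobiTerm, mul_zpow, div_zpow, zpow_add₀ (neg_ne_zero.mpr one_ne_zero),
    zpow_add₀ hq₀, zpow_add₀ hx, zpow_sub₀ hy]
  ring

lemma jacobiTerm_mul_jacobiTerm_even (hq₀ : q ≠ 0) (hx : x ≠ 0) (hy : y ≠ 0) (i j : ℤ) :
    jacobiTerm q (x * y) (i + 1 + j) * jacobiTerm q (x / y) (i + 1 - j) =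
      x ^ 2 * (jacobiTerm (q ^ 2) (-(q ^ 2 * x ^ 2)) i * jacobiTerm (q ^ 2) (-(q * y ^ 2)) j) := by
  have hexp : (i + 1 + j) * (i + 1 + j - 1) / 2 + (i + 1 - j) * (i + 1 - j - 1) / 2 =
      i * (i - 1) + 2 * i + (j * (j - 1) + j) := by
    linarith [two_mul_self_mul_sub_one_div_two (i + 1 + j),
      two_mul_self_mul_sub_one_div_two (i + 1 - j)]
  rw [jacobiTerm_mul_jacobiTerm hq₀ hx hy, jacobiTerm_sq_neg, jacobiTerm_sq_neg, hexp,
    show i + 1 + j + (i + 1 - j) = 2 * i + 2 by ring, show i + 1 + j - (i + 1 - j) = 2 * j by ring,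
    ((even_two_mul i).add even_two).neg_one_zpow, one_mul]
  simp only [zpow_add₀ hq₀, zpow_add₀ hx, mul_zpow, zpow_mul, zpow_ofNat]
  ring

lemma jacobiTerm_mul_jacobiTerm_odd (hq₀ : q ≠ 0) (hx : x ≠ 0) (hy : y ≠ 0) (i j : ℤ) :
    jacobiTerm q (x * y) (i + j + 1) * jacobiTerm q (x / y) (i - j) =
      -(x * y) *
        (jacobiTerm (q ^ 2) (-(q * x ^ 2)) i * jacobiTerm (q ^ 2) (-(q ^ 2 * y ^ 2)) j) := by
  have hexp : (i + j + 1) * (i + j + 1 - 1) / 2 + (i - j) * (i - j - 1) / 2 =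
      i * (i - 1) + i + (j * (j - 1) + 2 * j) := by
    linarith [two_mul_self_mul_sub_one_div_two (i + j + 1),
      two_mul_self_mul_sub_one_div_two (i - j)]
  rw [jacobiTerm_mul_jacobiTerm hq₀ hx hy, jacobiTerm_sq_neg, jacobiTerm_sq_neg, hexp,
    show i + j + 1 + (i - j) = 2 * i + 1 by ring, show i + j + 1 - (i - j) = 2 * j + 1 by ring,
    (odd_two_mul_add_one i).neg_one_zpow]
  simp only [zpow_add₀ hq₀, zpow_add_one₀ hx, zpow_add_one₀ hy, mul_zpow, zpow_mul, zpow_ofNat]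
  ring

variable [CompleteSpace 𝕜]

lemma hasSum_jacobiTerm_mul_jacobiTerm (hq₀ : q ≠ 0) (hq : ‖q‖ < 1) (hx : x ≠ 0) (hy : y ≠ 0) :
    HasSum (fun p : ℤ × ℤ ↦ jacobiTerm q x p.1 * jacobiTerm q y p.2)
      (jacobiSeries q x * jacobiSeries q y) := by
  have hx_summable := summable_norm_jacobiTerm hq₀ hq hx
  have hy_summable := summable_norm_jacobiTerm hq₀ hq hy
  rw [jacobiSeries, jacobiSeries, tsum_mul_tsum_of_summable_norm hx_summable hy_summable]
  exact (summable_mul_of_summable_norm hx_summable hy_summable).hasSum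

-- The quadratic form `m² + n²` is diagonal in `m + n` and `m - n`, which have the same parity.
lemma jacobiSeries_mul_jacobiSeries (hq₀ : q ≠ 0) (hq : ‖q‖ < 1) (hx : x ≠ 0) (hy : y ≠ 0) :
    jacobiSeries q (x * y) * jacobiSeries q (x / y) =
      x ^ 2 * (jacobiSeries (q ^ 2) (-(q ^ 2 * x ^ 2)) * jacobiSeries (q ^ 2) (-(q * y ^ 2))) +
      -(x * y) *
        (jacobiSeries (q ^ 2) (-(q * x ^ 2)) * jacobiSeries (q ^ 2) (-(q ^ 2 * y ^ 2))) := by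
  have hq_sq : ‖q ^ 2‖ < 1 := norm_pow_lt_one hq two_ne_zero
  have hodd_ne {z : 𝕜} (hz : z ≠ 0) : -(q * z ^ 2) ≠ 0 := by simp [hq₀, hz]
  have heven_ne {z : 𝕜} (hz : z ≠ 0) : -(q ^ 2 * z ^ 2) ≠ 0 := by simp [hq₀, hz]
  refine (hasSum_jacobiTerm_mul_jacobiTerm hq₀ hq (mul_ne_zero hx hy) (div_ne_zero hx hy)).unique
    (hasSum_of_hasSum_even_of_hasSum_odd ?_ ?_)
  · simp only [jacobiTerm_mul_jacobiTerm_even hq₀ hx hy]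
    exact (hasSum_jacobiTerm_mul_jacobiTerm (pow_ne_zero 2 hq₀) hq_sq (heven_ne hx)
      (hodd_ne hy)).mul_left _
  · simp only [jacobiTerm_mul_jacobiTerm_odd hq₀ hx hy]
    exact (hasSum_jacobiTerm_mul_jacobiTerm (pow_ne_zero 2 hq₀) hq_sq (hodd_ne hx)
      (heven_ne hy)).mul_left _

-- By `jacobiSeries_mul_jacobiSeries`, each product `J(xy) J(x/y)` is, up to the factor `x`, a
-- `2 × 2` minor of one matrix with two rows, so this is a Plücker relation.
lemma jacobiSeries_three_term (hq₀ : q ≠ 0) (hq : ‖q‖ < 1) (hx : x ≠ 0) (hy : y ≠ 0) (hu : u ≠ 0)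
    (hv : v ≠ 0) :
    jacobiSeries q (x * y) * jacobiSeries q (x / y) *
          (jacobiSeries q (u * v) * jacobiSeries q (u / v)) -
        jacobiSeries q (x * v) * jacobiSeries q (x / v) *
          (jacobiSeries q (u * y) * jacobiSeries q (u / y)) =
      u / y * (jacobiSeries q (y * v) * jacobiSeries q (y / v) *
        (jacobiSeries q (x * u) * jacobiSeries q (x / u))) := by
  simp only [jacobiSeries_mul_jacobiSeries hq₀ hq, hx, hy, hu, hv, ne_eq, not_false_eq_true]
  field_simp
  ring

theorem qTheta_three_term (hq₀ : q ≠ 0) (hq : ‖q‖ < 1) (hx : x ≠ 0) (hy : y ≠ 0) (hu : u ≠ 0)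
    (hv : v ≠ 0) :
    qTheta (x * y) q * qTheta (x / y) q * (qTheta (u * v) q * qTheta (u / v) q) -
        qTheta (x * v) q * qTheta (x / v) q * (qTheta (u * y) q * qTheta (u / y) q) =
      u / y * (qTheta (y * v) q * qTheta (y / v) q * (qTheta (x * u) q * qTheta (x / u) q)) := by
  have hJ := jacobiSeries_three_term hq₀ hq hx hy hu hv
  simp only [jacobiSeries_eq_qPochhammer_mul_qTheta hq₀ hq, mul_ne_zero, div_ne_zero, hx, hy, hu,
    hv, ne_eq, not_false_eq_true] at hJ
  refine mul_left_cancel₀ (pow_ne_zero 4 (qPochhammer_ne_zero hq hq)) ?_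
  linear_combination hJ

lemma qTheta_inv (hq : ‖q‖ < 1) (hx : x ≠ 0) :
    qTheta x⁻¹ q = -x⁻¹ * qTheta x q := by
  rw [qTheta, qTheta, div_inv_eq_mul, qPochhammer_eq_one_sub_mul x⁻¹ hq,
    qPochhammer_eq_one_sub_mul x hq, mul_comm q x, inv_mul_eq_div]
  field_simp
  ring

end Theta

section WeierstrassSeries

variable {q x u v : ℂ}

lemma hasDerivAt_tprod_one_sub_mul {b : ℕ → ℂ} (hb : Summable fun n ↦ ‖b n‖) :
    HasDerivAt (fun w ↦ ∏' n, (1 - w * b n)) (-∑' n, b n) 0 := by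
  have hprod : HasProdLocallyUniformlyOn (fun n w ↦ 1 - w * b n) (fun w ↦ ∏' n, (1 - w * b n))
      (Metric.ball 0 1) := by
    simp only [sub_eq_add_neg]
    refine hb.hasProdLocallyUniformlyOn_nat_one_add Metric.isOpen_ball
      (.of_forall fun n w hw ↦ ?_) fun n ↦ by fun_prop
    rw [norm_neg, norm_mul]
    exact mul_le_of_le_one_left (norm_nonneg _) (mem_ball_zero_iff.mp hw).le
  have hzero : (0 : ℂ) ∈ Metric.ball 0 1 := Metric.mem_ball_self one_pos
  have hdiff : DifferentiableAt ℂ (fun w ↦ ∏' n, (1 - w * b n)) 0 :=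
    (TendstoLocallyUniformlyOn.differentiableOn
      (hasProdLocallyUniformlyOn_iff_tendstoLocallyUniformlyOn.mp hprod)
      (.of_forall fun s ↦ by fun_prop) Metric.isOpen_ball).differentiableAt
      (Metric.isOpen_ball.mem_nhds hzero)
  have hlogDeriv (n : ℕ) : logDeriv (fun w ↦ 1 - w * b n) 0 = -b n := by simp [logDeriv_apply]
  have hsum := logDeriv_tprod_eq_tsum Metric.isOpen_ball hzero (f := fun n w ↦ 1 - w * b n)
    (by simp) (fun n ↦ by fun_prop) (by simpa only [hlogDeriv] using hb.of_norm.neg)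
    hprod.multipliableLocallyUniformlyOn (by simp)
  simp only [hlogDeriv, tsum_neg, logDeriv_apply, zero_mul, sub_zero, tprod_one, div_one] at hsum
  exact hsum ▸ hdiff.hasDerivAt

/-- The general term `x qⁿ / (1 - x qⁿ)²` of `weierstrassSeries`. -/
noncomputable def weierstrassTerm (x q : ℂ) (n : ℕ) : ℂ := x * q ^ n / (1 - x * q ^ n) ^ 2

/-- The series `∑ x qⁿ / (1 - x qⁿ)²` over all integers `n`, with the terms of negative index
rewritten by `y / (1 - y)² = y⁻¹ / (1 - y⁻¹)²`. Up to a factor and an additive constant depending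
only on `q = e^{2πiτ}`, it is the Weierstrass function `℘(z; τ)` at `x = e^{2πiz}`. -/
noncomputable def weierstrassSeries (x q : ℂ) : ℂ :=
  ∑' n, weierstrassTerm x q n + ∑' n, weierstrassTerm (q / x) q n

/-- The product `∏ (1 - w x qⁿ / (1 - x qⁿ)²)`. At `w = v + v⁻¹ - 2` it is the ratio of
`(x v; q)_∞ (x / v; q)_∞` to its value at `v = 1`. -/
noncomputable def weierstrassProd (x q w : ℂ) : ℂ := ∏' n, (1 - w * weierstrassTerm x q n)

lemma summable_norm_weierstrassTerm (x : ℂ) (hq : ‖q‖ < 1) :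
    Summable fun n ↦ ‖weierstrassTerm x q n‖ := by
  have hpow : Tendsto (fun n : ℕ ↦ x * q ^ n) atTop (𝓝 0) := by
    simpa using (tendsto_pow_atTop_nhds_zero_of_norm_lt_one hq).const_mul x
  have hdenom : Tendsto (fun n : ℕ ↦ ((1 - x * q ^ n) ^ 2)⁻¹) atTop (𝓝 1) := by
    simpa using ((hpow.const_sub 1).pow 2).inv₀ (by simp)
  rw [← Nat.cofinite_eq_atTop] at hdenom
  exact ((summable_norm_mul_pow x hq).mul_tendsto_const hdenom).norm

lemma weierstrassProd_zero (x q : ℂ) : weierstrassProd x q 0 = 1 := by simp [weierstrassProd]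

lemma hasProd_weierstrassProd (x w : ℂ) (hq : ‖q‖ < 1) :
    HasProd (fun n ↦ 1 - w * weierstrassTerm x q n) (weierstrassProd x q w) :=
  hasProd_tprod_one_sub <| by
    simpa only [norm_mul] using (summable_norm_weierstrassTerm x hq).mul_left ‖w‖

lemma hasDerivAt_weierstrassProd (x : ℂ) (hq : ‖q‖ < 1) :
    HasDerivAt (weierstrassProd x q) (-∑' n, weierstrassTerm x q n) 0 :=
  hasDerivAt_tprod_one_sub_mul (summable_norm_weierstrassTerm x hq)

lemma qPochhammer_mul_qPochhammer_div (hq : ‖q‖ < 1) (hx : qPochhammer x q ≠ 0) (hv : v ≠ 0) :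
    qPochhammer (x * v) q * qPochhammer (x / v) q =
      qPochhammer x q ^ 2 * weierstrassProd x q (v + v⁻¹ - 2) := by
  have hleft := (hasProd_qPochhammer (x * v) hq).mul (hasProd_qPochhammer (x / v) hq)
  have hsq := (hasProd_qPochhammer x hq).mul (hasProd_qPochhammer x hq)
  rw [pow_two]
  refine hleft.unique ((hsq.mul (hasProd_weierstrassProd x (v + v⁻¹ - 2) hq)).congr_fun fun n ↦ ?_)
  have hfactor := (qPochhammer_ne_zero_iff hq).mp hx n
  rw [weierstrassTerm]
  field_simp
  ring

lemma qTheta_mul_qTheta_div (hq : ‖q‖ < 1) (hx : qTheta x q ≠ 0) (hv : v ≠ 0) :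
    qTheta (x * v) q * qTheta (x / v) q = qTheta x q ^ 2 *
      (weierstrassProd x q (v + v⁻¹ - 2) * weierstrassProd (q / x) q (v + v⁻¹ - 2)) := by
  have hpair := qPochhammer_mul_qPochhammer_div hq (left_ne_zero_of_mul hx) hv
  have hpair' := qPochhammer_mul_qPochhammer_div hq (right_ne_zero_of_mul hx) hv
  rw [qTheta, qTheta, qTheta, ← div_div, div_div_eq_mul_div, mul_div_right_comm]
  linear_combination qPochhammer (q / x * v) q * qPochhammer (q / x / v) q * hpair +
    qPochhammer x q ^ 2 * weierstrassProd x q (v + v⁻¹ - 2) * hpair'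

lemma qTheta_mul_qTheta_inv (hq : ‖q‖ < 1) (hv : v ≠ 0) :
    qTheta v q * qTheta v⁻¹ q = -(v + v⁻¹ - 2) *
      (qPochhammer q q ^ 2 * weierstrassProd q q (v + v⁻¹ - 2)) ^ 2 := by
  rw [← qPochhammer_mul_qPochhammer_div hq (qPochhammer_ne_zero hq hq) hv, qTheta_inv hq hv, qTheta,
    qPochhammer_eq_one_sub_mul v hq, mul_comm v q]
  field_simp
  ring

lemma exists_add_inv_sub_two_eq (w : ℂ) : ∃ v : ℂ, v ≠ 0 ∧ v + v⁻¹ - 2 = w := by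
  obtain ⟨s, hs⟩ := IsAlgClosed.exists_pow_nat_eq (discrim 1 (-(w + 2)) 1) two_pos
  obtain ⟨v, hv⟩ := exists_quadratic_eq_zero one_ne_zero ⟨s, by rw [← hs, sq]⟩
  have hv₀ : v ≠ 0 := by rintro rfl; simp at hv
  refine ⟨v, hv₀, ?_⟩
  field_simp
  linear_combination hv

lemma qTheta_three_term_weierstrassProd (hq₀ : q ≠ 0) (hq : ‖q‖ < 1) (hx₀ : x ≠ 0) (hu₀ : u ≠ 0)
    (hx : qTheta x q ≠ 0) (hu : qTheta u q ≠ 0) (w : ℂ) :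
    qTheta x q ^ 2 * qTheta u q ^ 2 *
        (weierstrassProd u q w * weierstrassProd (q / u) q w -
          weierstrassProd x q w * weierstrassProd (q / x) q w) =
      w * (-u * (qPochhammer q q ^ 2 * weierstrassProd q q w) ^ 2 *
        (qTheta (x * u) q * qTheta (x / u) q)) := by
  obtain ⟨v, hv, rfl⟩ := exists_add_inv_sub_two_eq w
  have hthree := qTheta_three_term hq₀ hq hx₀ one_ne_zero hu₀ hv
  simp only [mul_one, div_one, one_mul, one_div] at hthree
  rw [qTheta_mul_qTheta_div hq hx hv, qTheta_mul_qTheta_div hq hu hv,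
    qTheta_mul_qTheta_inv hq hv] at hthree
  linear_combination hthree

-- Differentiate the three-term relation at `w = v + v⁻¹ - 2 = 0`.
theorem weierstrassSeries_sub_weierstrassSeries (hq₀ : q ≠ 0) (hq : ‖q‖ < 1) (hx₀ : x ≠ 0)
    (hu₀ : u ≠ 0) (hx : qTheta x q ≠ 0) (hu : qTheta u q ≠ 0) :
    qTheta x q ^ 2 * qTheta u q ^ 2 * (weierstrassSeries x q - weierstrassSeries u q) =
      -u * qPochhammer q q ^ 4 * (qTheta (x * u) q * qTheta (x / u) q) := by
  have hpair (z : ℂ) : HasDerivAt (fun w ↦ weierstrassProd z q w * weierstrassProd (q / z) q w)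
      (-weierstrassSeries z q) 0 := by
    refine ((hasDerivAt_weierstrassProd z hq).mul
      (hasDerivAt_weierstrassProd (q / z) hq)).congr_deriv ?_
    rw [weierstrassProd_zero, weierstrassProd_zero, weierstrassSeries]
    ring
  have hleft := ((hpair u).sub (hpair x)).const_mul (qTheta x q ^ 2 * qTheta u q ^ 2)
  have hright := (hasDerivAt_id (0 : ℂ)).mul ((((hasDerivAt_weierstrassProd q hq).const_mul
    (qPochhammer q q ^ 2)).pow 2 |>.const_mul (-u)).mul_const (qTheta (x * u) q * qTheta (x / u) q))
  have hderiv := hleft.unique (hright.congr_of_eventuallyEq (.of_forall fun w ↦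
    qTheta_three_term_weierstrassProd hq₀ hq hx₀ hu₀ hx hu w))
  simp only [sub_neg_eq_add, Pi.pow_apply, weierstrassProd_zero, mul_one, neg_mul, mul_neg, one_mul,
    id_eq, zero_mul] at hderiv
  linear_combination hderiv

end WeierstrassSeries

section Lambert

variable {q x z : ℂ}

lemma summable_natCast_mul_mul_pow_pow (hz : ‖z‖ < 1) (hq : ‖q‖ < 1) :
    Summable fun p : ℕ × ℕ ↦ (p.2 : ℂ) * (z * q ^ p.1) ^ p.2 := by
  have hcoef : Summable fun n : ℕ ↦ ‖(n : ℂ) * z ^ n‖ := by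
    simpa using summable_norm_pow_mul_geometric_of_norm_lt_one 1 hz
  refine .of_norm_bounded ((summable_norm_geometric_of_norm_lt_one hq).mul_of_nonneg hcoef
    (fun m ↦ norm_nonneg _) fun n ↦ norm_nonneg _) ?_
  rintro ⟨m, n⟩
  rcases eq_or_ne n 0 with rfl | hn
  · simp
  · have hpow : ‖(q ^ m) ^ n‖ ≤ ‖q ^ m‖ := by
      rw [norm_pow]
      exact pow_le_of_le_one (norm_nonneg _)
        (by rw [norm_pow]; exact pow_le_one₀ (norm_nonneg q) hq.le) hn
    rw [mul_pow, ← mul_assoc, norm_mul, mul_comm]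
    gcongr

lemma hasSum_natCast_mul_pow_div_one_sub (hz : ‖z‖ < 1) (hq : ‖q‖ < 1) :
    HasSum (fun n : ℕ ↦ (n : ℂ) * z ^ n / (1 - q ^ n)) (∑' n, weierstrassTerm z q n) := by
  have hdouble := (summable_natCast_mul_mul_pow_pow hz hq).hasSum
  have hrows (m : ℕ) : HasSum (fun n : ℕ ↦ (n : ℂ) * (z * q ^ m) ^ n) (weierstrassTerm z q m) :=
    hasSum_coe_mul_geometric_of_norm_lt_one (norm_mul_pow_lt_one hz hq m)
  have hcolumns (n : ℕ) :
      HasSum (fun m : ℕ ↦ (n : ℂ) * (z * q ^ m) ^ n) ((n : ℂ) * z ^ n / (1 - q ^ n)) := by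
    rcases eq_or_ne n 0 with rfl | hn
    · simp
    · simpa only [mul_pow, pow_right_comm q, mul_assoc, div_eq_mul_inv] using
        (hasSum_geometric_of_norm_lt_one (norm_pow_lt_one hq hn)).mul_left ((n : ℂ) * z ^ n)
  rw [(hdouble.prod_fiberwise hrows).tsum_eq]
  exact ((Equiv.prodComm ℕ ℕ).hasSum_iff.mpr hdouble).prod_fiberwise hcolumns

lemma hasSum_weierstrassSeries_sub (hq : ‖q‖ < 1) (hxq : ‖x * q‖ < 1) (hqx : ‖q / x‖ < 1) :
    HasSum (fun n : ℕ ↦ (x ^ n + (x ^ n)⁻¹) * (n * q ^ n / (1 - q ^ n)))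
      (weierstrassSeries x q - x / (1 - x) ^ 2) := by
  have hhead : ∑' n, weierstrassTerm x q n =
      x / (1 - x) ^ 2 + ∑' n, weierstrassTerm (x * q) q n := by
    rw [(summable_norm_weierstrassTerm x hq).of_norm.tsum_eq_zero_add]
    simp [weierstrassTerm, pow_succ', mul_assoc]
  rw [weierstrassSeries, hhead, add_assoc, add_sub_cancel_left]
  refine ((hasSum_natCast_mul_pow_div_one_sub hxq hq).add
    (hasSum_natCast_mul_pow_div_one_sub hqx hq)).congr_fun fun n ↦ ?_
  rw [mul_pow, div_pow]
  ring

end Lambert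

section LambertEvaluation

/-- The exponent of `1 - q ^ n` in the product `k(q) = q ∏ (1 - q ^ n) ^ χ(n)`. It is `1` for
`n ≡ ±1, ±2`, `-1` for `n ≡ ±3, ±4` and `0` for `n ≡ 0, 5` modulo `10`. -/
def ramKExponent (n : ℕ) : ℤ := (-1) ^ (n + 1) * jacobiSym n 5

/-- The Lambert series `1 - ∑ χ(n) n qⁿ / (1 - qⁿ)`, which is `q k'(q) / k(q)`. -/
noncomputable def ramKLambert {𝕜 : Type*} [NormedField 𝕜] (q : 𝕜) : 𝕜 :=
  1 - ∑' n : ℕ, ramKExponent n * (n * q ^ n / (1 - q ^ n))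

lemma one_add_pow_add_pow_eq_zero_of_isPrimitiveRoot_five {R : Type*} [CommRing R] [IsDomain R]
    {ζ : R} (hζ : IsPrimitiveRoot ζ 5) : 1 + ζ + ζ ^ 2 + ζ ^ 3 + ζ ^ 4 = 0 := by
  simpa [sum_range_succ] using hζ.geom_sum_eq_zero (by norm_num)

lemma gauss_sum_five {R : Type*} [CommRing R] {ζ : R} (hζ : ζ ^ 5 = 1) (n : ℕ) :
    ζ ^ n + ζ ^ (4 * n) - (ζ ^ (2 * n) + ζ ^ (3 * n)) =
      jacobiSym n 5 * (ζ + ζ ^ 4 - (ζ ^ 2 + ζ ^ 3)) := by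
  have hsym : jacobiSym n 5 = jacobiSym (n % 5 : ℕ) 5 := by rw [jacobiSym.mod_left]; norm_cast
  have hpow (i : ℕ) : ζ ^ (i * n) = ζ ^ (i * (n % 5)) := by
    rw [mul_comm i, mul_comm i, pow_mul, pow_eq_pow_mod n hζ, pow_mul]
  rw [hsym, hpow, hpow, hpow, pow_eq_pow_mod n hζ]
  have hlt : n % 5 < 5 := Nat.mod_lt n (by norm_num)
  interval_cases n % 5 <;> norm_num <;> grind

section FifthRootsOfUnity

variable {𝕜 : Type*} [NormedField 𝕜] [CompleteSpace 𝕜] {q ζ c : 𝕜}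

lemma qPochhammer_mul_qPochhammer_neg (a : 𝕜) (hq : ‖q‖ < 1) :
    qPochhammer a q * qPochhammer (-a) q = qPochhammer (a ^ 2) (q ^ 2) := by
  refine ((hasProd_qPochhammer a hq).mul (hasProd_qPochhammer (-a) hq)).unique
    ((hasProd_qPochhammer (a ^ 2) (norm_pow_lt_one hq two_ne_zero)).congr_fun fun n ↦ ?_)
  ring

lemma qTheta_mul_qTheta_sq_of_isPrimitiveRoot_five (hq : ‖q‖ < 1) (hζ : IsPrimitiveRoot ζ 5)
    (hc : c ^ 2 = 1) :
    qTheta (c * ζ) q * qTheta (c * ζ ^ 2) q * qPochhammer (c * q) q =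
      (1 - c * ζ) * (1 - c * ζ ^ 2) * qPochhammer (c * q ^ 5) (q ^ 5) := by
  have hζ₀ : ζ ≠ 0 := hζ.ne_zero (by norm_num)
  have hc₀ : c ≠ 0 := by rintro rfl; simp at hc
  have hinv₁ : q / (c * ζ) = ζ ^ 4 * (c * q) := by
    rw [div_eq_iff (mul_ne_zero hc₀ hζ₀)]
    linear_combination -q * c ^ 2 * hζ.pow_eq_one - q * hc
  have hinv₂ : q / (c * ζ ^ 2) = ζ ^ 3 * (c * q) := by
    rw [div_eq_iff (mul_ne_zero hc₀ (pow_ne_zero 2 hζ₀))]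
    linear_combination -q * c ^ 2 * hζ.pow_eq_one - q * hc
  have hprod := prod_qPochhammer_pow_mul hζ (by norm_num) hq (c * q)
  simp only [prod_range_succ, prod_range_zero, pow_zero, pow_one, one_mul, mul_pow,
    show c ^ 5 = c by linear_combination c * (c ^ 2 + 1) * hc] at hprod
  rw [qTheta, qTheta, hinv₁, hinv₂, qPochhammer_eq_one_sub_mul (c * ζ) hq,
    qPochhammer_eq_one_sub_mul (c * ζ ^ 2) hq, mul_comm c ζ, mul_comm c (ζ ^ 2), mul_assoc ζ,
    mul_assoc (ζ ^ 2)]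
  linear_combination (1 - ζ * c) * (1 - ζ ^ 2 * c) * hprod

lemma qTheta_neg_sq_mul_qTheta_neg_pow_four_of_isPrimitiveRoot_five (hq : ‖q‖ < 1)
    (hζ : IsPrimitiveRoot ζ 5) :
    qTheta (-ζ ^ 2) q * qTheta (-ζ ^ 4) q * qPochhammer (-q) q =
      -ζ ^ 3 * qPochhammer (-q ^ 5) (q ^ 5) := by
  have hθ := qTheta_mul_qTheta_sq_of_isPrimitiveRoot_five hq
    (hζ.pow_of_coprime 2 (by norm_num)) (neg_one_sq (R := 𝕜))
  simp only [neg_one_mul, ← pow_mul, Nat.reduceMul] at hθ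
  rw [hθ]
  linear_combination qPochhammer (-q ^ 5) (q ^ 5) *
    (ζ * hζ.pow_eq_one + one_add_pow_add_pow_eq_zero_of_isPrimitiveRoot_five hζ)

end FifthRootsOfUnity

lemma pow_add_inv_sub_eq_ramKExponent_mul {F : Type*} [Field F] {ζ : F} (hζ : ζ ^ 5 = 1) (n : ℕ) :
    (-ζ ^ 4) ^ n + ((-ζ ^ 4) ^ n)⁻¹ - ((-ζ ^ 2) ^ n + ((-ζ ^ 2) ^ n)⁻¹) =
      -((ζ + ζ ^ 4 - (ζ ^ 2 + ζ ^ 3)) * ramKExponent n) := by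
  have hinv₄ : (-ζ ^ 4)⁻¹ = -ζ := inv_eq_of_mul_eq_one_left (by linear_combination hζ)
  have hinv₂ : (-ζ ^ 2)⁻¹ = -ζ ^ 3 := inv_eq_of_mul_eq_one_left (by linear_combination hζ)
  rw [← inv_pow, ← inv_pow, hinv₄, hinv₂, neg_pow, neg_pow ζ, neg_pow (ζ ^ 2), neg_pow (ζ ^ 3),
    ← pow_mul, ← pow_mul, ← pow_mul, ramKExponent]
  push_cast
  linear_combination (-1) ^ n * gauss_sum_five hζ n

lemma neg_pow_div_one_add_sq_sub_of_isPrimitiveRoot_five {F : Type*} [Field F] {ζ : F}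
    (hζ : IsPrimitiveRoot ζ 5) :
    -ζ ^ 4 / (1 - -ζ ^ 4) ^ 2 - -ζ ^ 2 / (1 - -ζ ^ 2) ^ 2 = ζ + ζ ^ 4 - (ζ ^ 2 + ζ ^ 3) := by
  have hsum := one_add_pow_add_pow_eq_zero_of_isPrimitiveRoot_five hζ
  have hinv₄ : (1 - -ζ ^ 4)⁻¹ = -ζ ^ 2 * (1 + ζ ^ 2) := inv_eq_of_mul_eq_one_left <| by
    linear_combination -(ζ + ζ ^ 3) * hζ.pow_eq_one - hsum
  have hinv₂ : (1 - -ζ ^ 2)⁻¹ = -ζ ^ 2 * (1 + ζ ^ 4) := inv_eq_of_mul_eq_one_left <| by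
    linear_combination -(ζ + ζ ^ 3) * hζ.pow_eq_one - hsum
  rw [div_eq_mul_inv, div_eq_mul_inv, ← inv_pow, ← inv_pow, hinv₄, hinv₂]
  linear_combination (ζ + ζ ^ 4 - (ζ ^ 2 + ζ ^ 3) + ζ ^ 9 - ζ ^ 7) * hζ.pow_eq_one

variable {q ζ : ℂ}

lemma weierstrassSeries_sub_eq_mul_ramKLambert (hq : ‖q‖ < 1) (hζ : IsPrimitiveRoot ζ 5) :
    weierstrassSeries (-ζ ^ 4) q - weierstrassSeries (-ζ ^ 2) q =
      (ζ + ζ ^ 4 - (ζ ^ 2 + ζ ^ 3)) * ramKLambert q := by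
  have hnorm (i : ℕ) : ‖-ζ ^ i‖ = 1 := by
    rw [norm_neg, norm_pow, hζ.norm'_eq_one (by norm_num), one_pow]
  have hexpansion (i : ℕ) := hasSum_weierstrassSeries_sub (x := -ζ ^ i) hq
    (by rwa [norm_mul, hnorm, one_mul]) (by rwa [norm_div, hnorm, div_one])
  have hsum := ((hexpansion 4).sub (hexpansion 2)).tsum_eq
  simp only [← sub_mul, pow_add_inv_sub_eq_ramKExponent_mul hζ.pow_eq_one, neg_mul, mul_assoc,
    tsum_neg, tsum_mul_left] at hsum
  rw [ramKLambert]
  linear_combination neg_pow_div_one_add_sq_sub_of_isPrimitiveRoot_five hζ - hsum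

-- The difference `℘(x) - ℘(u)` is evaluated at `x = -ζ⁴` and `u = -ζ²`, where `ζ` is a primitive
-- fifth root of unity, so that `x u = ζ` and `x / u = ζ²`.
lemma ramKLambert_mul_qPochhammer_neg_sq (hq₀ : q ≠ 0) (hq : ‖q‖ < 1) :
    ramKLambert q * qPochhammer (-q ^ 5) (q ^ 5) ^ 2 =
      qPochhammer (-q) q ^ 2 * qPochhammer q q ^ 3 * qPochhammer (q ^ 5) (q ^ 5) := by
  obtain ⟨ζ, hζ⟩ : ∃ ζ : ℂ, IsPrimitiveRoot ζ 5 := ⟨_, Complex.isPrimitiveRoot_exp 5 (by norm_num)⟩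
  have hζ₀ : ζ ≠ 0 := hζ.ne_zero (by norm_num)
  have hq5 : ‖q ^ 5‖ < 1 := norm_pow_lt_one hq (by norm_num)
  have hθ_pos : qTheta ζ q * qTheta (ζ ^ 2) q * qPochhammer q q =
      (1 - ζ) * (1 - ζ ^ 2) * qPochhammer (q ^ 5) (q ^ 5) := by
    simpa only [one_mul] using qTheta_mul_qTheta_sq_of_isPrimitiveRoot_five hq hζ (one_pow 2)
  have hθ_neg := qTheta_neg_sq_mul_qTheta_neg_pow_four_of_isPrimitiveRoot_five hq hζ
  have hθ_ne : qTheta (-ζ ^ 2) q * qTheta (-ζ ^ 4) q ≠ 0 := by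
    refine left_ne_zero_of_mul (b := qPochhammer (-q) q) ?_
    rw [hθ_neg]
    exact mul_ne_zero (neg_ne_zero.mpr (pow_ne_zero 3 hζ₀))
      (qPochhammer_ne_zero (by rwa [norm_neg]) hq5)
  have hdiff := weierstrassSeries_sub_weierstrassSeries hq₀ hq
    (neg_ne_zero.mpr (pow_ne_zero 4 hζ₀)) (neg_ne_zero.mpr (pow_ne_zero 2 hζ₀))
    (right_ne_zero_of_mul hθ_ne) (left_ne_zero_of_mul hθ_ne)
  rw [weierstrassSeries_sub_eq_mul_ramKLambert hq hζ,
    show -ζ ^ 4 * -ζ ^ 2 = ζ by linear_combination ζ * hζ.pow_eq_one,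
    show -ζ ^ 4 / -ζ ^ 2 = ζ ^ 2 by field_simp] at hdiff
  have hconst_ne : ζ ^ 2 * (1 - ζ) * (1 - ζ ^ 2) ≠ 0 :=
    mul_ne_zero (mul_ne_zero (pow_ne_zero 2 hζ₀) (sub_ne_zero.mpr (hζ.ne_one (by norm_num)).symm))
      (sub_ne_zero.mpr (hζ.pow_ne_one_of_pos_of_lt two_ne_zero (by norm_num)).symm)
  refine mul_left_cancel₀ (mul_ne_zero hconst_ne (qPochhammer_ne_zero hq hq)) ?_
  linear_combination qPochhammer (-q) q ^ 2 * qPochhammer q q * hdiff +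
    qPochhammer (-q) q ^ 2 * ζ ^ 2 * qPochhammer q q ^ 4 * hθ_pos -
    (ζ + ζ ^ 4 - (ζ ^ 2 + ζ ^ 3)) * qPochhammer q q * ramKLambert q *
      (qTheta (-ζ ^ 2) q * qTheta (-ζ ^ 4) q * qPochhammer (-q) q -
        ζ ^ 3 * qPochhammer (-q ^ 5) (q ^ 5)) * hθ_neg -
    ζ ^ 2 * (1 - ζ) * (1 - ζ ^ 2) * qPochhammer q q * ramKLambert q *
      qPochhammer (-q ^ 5) (q ^ 5) ^ 2 * hζ.pow_eq_one

theorem ramKLambert_mul_qPochhammer_sq (hq₀ : q ≠ 0) (hq : ‖q‖ < 1) :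
    ramKLambert q * qPochhammer (q ^ 10) (q ^ 10) ^ 2 =
      qPochhammer q q * qPochhammer (q ^ 2) (q ^ 2) ^ 2 * qPochhammer (q ^ 5) (q ^ 5) ^ 3 := by
  rw [show q ^ 10 = (q ^ 5) ^ 2 by ring, ← qPochhammer_mul_qPochhammer_neg q hq,
    ← qPochhammer_mul_qPochhammer_neg (q ^ 5) (norm_pow_lt_one hq (by norm_num))]
  linear_combination
    qPochhammer (q ^ 5) (q ^ 5) ^ 2 * ramKLambert_mul_qPochhammer_neg_sq hq₀ hq

end LambertEvaluation

section LogSeries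

variable {c : ℕ → ℝ} {C x q : ℝ}

lemma summable_mul_log_one_sub_pow (hc : ∀ n, |c n| ≤ C) (hx : |x| < 1) :
    Summable fun n ↦ c n * log (1 - x ^ n) := by
  have hlog : Summable fun n ↦ |log (1 - x ^ n)| := by
    simpa only [← sub_eq_add_neg] using
      (summable_log_one_add_of_summable (summable_geometric_of_abs_lt_one hx).neg).abs
  refine .of_norm_bounded (hlog.mul_left C) fun n ↦ ?_
  rw [norm_mul, norm_eq_abs, norm_eq_abs]
  gcongr
  exact hc n

lemma hasDerivAt_mul_log_one_sub_pow (c : ℝ) (hx : |x| < 1) (n : ℕ) :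
    HasDerivAt (fun y ↦ c * log (1 - y ^ n)) (c * (-(n * x ^ (n - 1)) / (1 - x ^ n))) x := by
  rcases eq_or_ne n 0 with rfl | hn
  · simpa using hasDerivAt_const x (0 : ℝ)
  · have hne : 1 - x ^ n ≠ 0 := one_sub_ne_zero_of_norm_lt_one (norm_pow_lt_one hx hn)
    exact (((hasDerivAt_pow n x).const_sub 1).log hne).const_mul c

lemma abs_mul_pow_div_one_sub_pow_le {r : ℝ} (hx : |x| ≤ r) (hr : r < 1) (n : ℕ) :
    |-(n * x ^ (n - 1)) / (1 - x ^ n)| ≤ n * r ^ (n - 1) / (1 - r) := by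
  rcases eq_or_ne n 0 with rfl | hn
  · simp
  · have hpow : |x ^ n| ≤ r := by
      rw [abs_pow]
      exact (pow_le_of_le_one (abs_nonneg x) (hx.trans hr.le) hn).trans hx
    have hdenom : 1 - r ≤ |1 - x ^ n| := by
      linarith [le_abs_self (1 - x ^ n), le_abs_self (x ^ n)]
    have hr₀ : 0 ≤ r := (abs_nonneg x).trans hx
    have : 0 < 1 - r := sub_pos.mpr hr
    rw [abs_div, abs_neg, abs_mul, abs_pow, Nat.abs_cast]
    gcongr

lemma summable_natCast_mul_pow_pred {r : ℝ} (hr : |r| < 1) :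
    Summable fun n : ℕ ↦ (n : ℝ) * r ^ (n - 1) := by
  refine (summable_nat_add_iff 1).mp ?_
  simpa [add_mul] using (hasSum_coe_mul_geometric_of_norm_lt_one hr).summable.add
    (summable_geometric_of_abs_lt_one hr)

lemma hasDerivAt_tsum_mul_log_one_sub_pow (hc : ∀ n, |c n| ≤ C) (hq : |q| < 1) :
    HasDerivAt (fun x ↦ ∑' n, c n * log (1 - x ^ n))
      (∑' n : ℕ, c n * (-(n * q ^ (n - 1)) / (1 - q ^ n))) q := by
  obtain ⟨r, hqr, hr⟩ := exists_between hq
  have hr₀ : |r| < 1 := by rwa [abs_of_pos ((abs_nonneg q).trans_lt hqr)]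
  refine hasDerivAt_tsum_of_isPreconnected
    (((summable_natCast_mul_pow_pred hr₀).div_const (1 - r)).mul_left C) Metric.isOpen_ball
    (convex_ball 0 r).isPreconnected
    (fun n y hy ↦ hasDerivAt_mul_log_one_sub_pow (c n) ((mem_ball_zero_iff.mp hy).trans hr) n)
    (fun n y hy ↦ ?_) (mem_ball_zero_iff.mpr hqr) (summable_mul_log_one_sub_pow hc hq)
    (mem_ball_zero_iff.mpr hqr)
  rw [norm_mul]
  exact mul_le_mul (hc n) (abs_mul_pow_div_one_sub_pow_le (mem_ball_zero_iff.mp hy).le hr n)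
    (norm_nonneg _) ((abs_nonneg _).trans (hc n))

end LogSeries

section RamK

variable {q : ℝ}

lemma abs_ramKExponent_le_one (n : ℕ) : |(ramKExponent n : ℝ)| ≤ 1 := by
  rw [ramKExponent]
  push_cast
  rw [abs_mul, abs_pow, abs_neg, abs_one, one_pow, one_mul]
  rcases jacobiSym.trichotomy n 5 with h | h | h <;> simp [h]

lemma ramKExponent_ten_mul_add (j i : ℕ) : ramKExponent (10 * j + i) = ramKExponent i := by
  have hsign : (-1 : ℤ) ^ (10 * j + i + 1) = (-1) ^ (i + 1) := by
    rw [add_assoc, pow_add, pow_mul]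
    norm_num
  have hsym : jacobiSym (10 * j + i : ℕ) 5 = jacobiSym i 5 := by
    rw [jacobiSym.mod_left, jacobiSym.mod_left i]
    congr 1
    omega
  rw [ramKExponent, ramKExponent, hsign, hsym]

lemma ramK_eq_mul_exp (hq : |q| < 1) :
    ramK q = q * exp (∑' n, ramKExponent n * log (1 - q ^ n)) := by
  have hlog := summable_mul_log_one_sub_pow abs_ramKExponent_le_one hq
  rw [ramK, ← (hasSum_sum_fin_of_hasSum hlog.hasSum 10).rexp.tprod_eq]
  congr 1
  refine tprod_congr fun j ↦ ?_
  have hpos (i : ℕ) (hi : i ≠ 0) : exp (log (1 - q ^ (10 * j + i))) = 1 - q ^ (10 * j + i) :=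
    exp_log (sub_pos.mpr ((le_norm_self _).trans_lt (norm_pow_lt_one hq (by omega))))
  simp only [Function.comp_apply, ramKExponent_ten_mul_add]
  have hexponents : ramKExponent 0 = 0 ∧ ramKExponent 1 = 1 ∧ ramKExponent 2 = 1 ∧
      ramKExponent 3 = -1 ∧ ramKExponent 4 = -1 ∧ ramKExponent 5 = 0 ∧ ramKExponent 6 = -1 ∧
      ramKExponent 7 = -1 ∧ ramKExponent 8 = 1 ∧ ramKExponent 9 = 1 := by
    norm_num [ramKExponent]
  simp only [Fin.sum_univ_succ, Fin.val_zero, Fin.val_succ, univ_eq_empty, sum_empty, zero_add,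
    Nat.reduceAdd, hexponents, exp_add]
  simp only [Int.cast_zero, Int.cast_one, Int.cast_neg, zero_mul, one_mul, neg_mul, exp_zero,
    exp_neg, hpos, ne_eq, OfNat.ofNat_ne_zero, one_ne_zero, not_false_eq_true]
  field_simp

lemma hasDerivAt_ramK (hq : |q| < 1) :
    HasDerivAt ramK (exp (∑' n, ramKExponent n * log (1 - q ^ n)) * ramKLambert q) q := by
  have hlog := hasDerivAt_tsum_mul_log_one_sub_pow abs_ramKExponent_le_one hq
  have hramK : ramK =ᶠ[𝓝 q] fun x ↦ x * exp (∑' n, ramKExponent n * log (1 - x ^ n)) := by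
    filter_upwards [continuous_abs.continuousAt.eventually_lt_const hq] with x hx
      using ramK_eq_mul_exp hx
  refine (((hasDerivAt_id q).mul hlog.exp).congr_of_eventuallyEq hramK).congr_deriv ?_
  have hlambert : q * ∑' n : ℕ, ramKExponent n * (-(n * q ^ (n - 1)) / (1 - q ^ n)) =
      ramKLambert q - 1 := by
    rw [ramKLambert, sub_sub_cancel_left, ← tsum_mul_left, ← tsum_neg]
    refine tsum_congr fun n ↦ ?_
    rcases n with _ | n
    · simp
    · rw [Nat.add_sub_cancel]
      ring
  rw [id]
  linear_combination exp (∑' n, ramKExponent n * log (1 - q ^ n)) * hlambert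

end RamK

section EulerProduct

variable {q : ℝ}

lemma ofReal_qPochhammer (a q : ℝ) : ((qPochhammer a q : ℝ) : ℂ) = qPochhammer (a : ℂ) q := by
  have hcast := Function.LeftInverse.map_tprod (fun n : ℕ ↦ 1 - a * q ^ n)
    (g := Complex.ofRealHom) (g' := Complex.re) (L := .unconditional ℕ)
    Complex.continuous_ofReal Complex.continuous_re Complex.ofReal_re
  simpa [qPochhammer] using hcast

lemma ofReal_ramKLambert (q : ℝ) : ((ramKLambert q : ℝ) : ℂ) = ramKLambert (q : ℂ) := by
  simp [ramKLambert, Complex.ofReal_tsum]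

lemma eulerE_eq_qPochhammer (q : ℝ) : eulerE q = qPochhammer q q := by
  simp only [eulerE, qPochhammer, pow_succ']

lemma eulerE_pow_ne_zero (hq : |q| < 1) {n : ℕ} (hn : n ≠ 0) : eulerE (q ^ n) ≠ 0 := by
  rw [eulerE_eq_qPochhammer]
  exact qPochhammer_ne_zero (norm_pow_lt_one hq hn) (norm_pow_lt_one hq hn)

theorem ramKLambert_mul_eulerE_sq (hq₀ : q ≠ 0) (hq : |q| < 1) :
    ramKLambert q * eulerE (q ^ 10) ^ 2 = eulerE q * eulerE (q ^ 2) ^ 2 * eulerE (q ^ 5) ^ 3 := by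
  have hcomplex := ramKLambert_mul_qPochhammer_sq (q := q) (Complex.ofReal_ne_zero.mpr hq₀)
    (by rwa [Complex.norm_real])
  simp only [← Complex.ofReal_pow, ← ofReal_qPochhammer, ← ofReal_ramKLambert] at hcomplex
  simp only [eulerE_eq_qPochhammer]
  exact_mod_cast hcomplex

end EulerProduct

section ThetaPow

variable {𝕜 : Type*} [NormedField 𝕜] {q : 𝕜}

lemma qTheta_pow_eq_qPochhammer_mul (hq₀ : q ≠ 0) {i n : ℕ} (hi : i ≤ n) :
    qTheta (q ^ i) (q ^ n) = qPochhammer (q ^ i) (q ^ n) * qPochhammer (q ^ (n - i)) (q ^ n) := by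
  rw [qTheta, pow_sub₀ q hq₀ hi, div_eq_mul_inv]

lemma qTheta_pow_sub (hq₀ : q ≠ 0) {i n : ℕ} (hi : i ≤ n) :
    qTheta (q ^ (n - i)) (q ^ n) = qTheta (q ^ i) (q ^ n) := by
  rw [pow_sub₀ q hq₀ hi, ← div_eq_mul_inv, qTheta_div_self (pow_ne_zero n hq₀)]

variable [CompleteSpace 𝕜]

lemma qTheta_pow_ne_zero (hq₀ : q ≠ 0) (hq : ‖q‖ < 1) {i n : ℕ} (hi₀ : i ≠ 0) (hi : i < n) :
    qTheta (q ^ i) (q ^ n) ≠ 0 := by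
  have hbase : ‖q ^ n‖ < 1 := norm_pow_lt_one hq (by omega)
  rw [qTheta_pow_eq_qPochhammer_mul hq₀ hi.le]
  exact mul_ne_zero (qPochhammer_ne_zero (norm_pow_lt_one hq hi₀) hbase)
    (qPochhammer_ne_zero (norm_pow_lt_one hq (by omega)) hbase)

lemma qTheta_level_ten_relation (hq₀ : q ≠ 0) (hq : ‖q‖ < 1) :
    (qTheta (q ^ 3) (q ^ 10) * qTheta (q ^ 4) (q ^ 10)) ^ 2 -
        (q * (qTheta q (q ^ 10) * qTheta (q ^ 2) (q ^ 10))) ^ 2 =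
      qTheta (q ^ 5) (q ^ 10) ^ 2 * (qTheta (q ^ 2) (q ^ 10) * qTheta (q ^ 4) (q ^ 10)) := by
  have hbase : ‖q ^ 10‖ < 1 := norm_pow_lt_one hq (by norm_num)
  have hthree := qTheta_three_term (pow_ne_zero 10 hq₀) hbase (pow_ne_zero 5 hq₀) one_ne_zero
    (pow_ne_zero 3 hq₀) hq₀
  have hθ₆ := qTheta_pow_sub hq₀ (show 4 ≤ 10 by norm_num)
  have hθ₈ := qTheta_pow_sub hq₀ (show 2 ≤ 10 by norm_num)
  have hdiv {m n : ℕ} (h : m ≤ n) : q ^ n / q ^ m = q ^ (n - m) := by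
    rw [pow_sub₀ q hq₀ h, div_eq_mul_inv]
  rw [← pow_succ, ← pow_succ, ← pow_add, hdiv (show 3 ≤ 5 by norm_num)] at hthree
  rw [show q ^ 5 / q = q ^ 4 by field_simp, show q ^ 3 / q = q ^ 2 by field_simp] at hthree
  simp only [mul_one, div_one, one_mul, one_div, qTheta_inv hbase hq₀] at hthree
  norm_num only at hthree hθ₆ hθ₈
  rw [hθ₆, hθ₈] at hthree
  field_simp at hthree
  linear_combination -hthree

end ThetaPow

section LevelTen

variable {q : ℝ}

lemma eulerE_pow_eq_prod_residues (hq : |q| < 1) (n m : ℕ) [NeZero n] [NeZero m] :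
    eulerE (q ^ n) = ∏ i : Fin m, qPochhammer (q ^ (n * (i + 1))) (q ^ (n * m)) := by
  rw [eulerE_eq_qPochhammer,
    qPochhammer_eq_prod_residues _ (norm_pow_lt_one hq (NeZero.ne n)) m]
  simp only [← pow_mul, ← pow_add, mul_add_one, add_comm]

lemma eulerE_eq_prod_qTheta (hq₀ : q ≠ 0) (hq : |q| < 1) :
    eulerE q = qTheta q (q ^ 10) * qTheta (q ^ 2) (q ^ 10) * qTheta (q ^ 3) (q ^ 10) *
      qTheta (q ^ 4) (q ^ 10) * eulerE (q ^ 5) := by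
  have hresidues := eulerE_pow_eq_prod_residues hq 1 10
  have hθ₁ := qTheta_pow_eq_qPochhammer_mul hq₀ (show 1 ≤ 10 by norm_num)
  rw [pow_one] at hresidues hθ₁
  rw [hresidues, hθ₁, eulerE_pow_eq_prod_residues hq 5 2,
    qTheta_pow_eq_qPochhammer_mul hq₀ (show 2 ≤ 10 by norm_num),
    qTheta_pow_eq_qPochhammer_mul hq₀ (show 3 ≤ 10 by norm_num),
    qTheta_pow_eq_qPochhammer_mul hq₀ (show 4 ≤ 10 by norm_num)]
  simp only [Fin.prod_univ_succ, Fin.val_zero, Fin.val_succ, univ_eq_empty, prod_empty]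
  norm_num only [pow_one]
  ring

lemma eulerE_sq_eq_prod_qTheta (hq₀ : q ≠ 0) (hq : |q| < 1) :
    eulerE (q ^ 2) = qTheta (q ^ 2) (q ^ 10) * qTheta (q ^ 4) (q ^ 10) * eulerE (q ^ 10) := by
  rw [eulerE_pow_eq_prod_residues hq 2 5, eulerE_eq_qPochhammer,
    qTheta_pow_eq_qPochhammer_mul hq₀ (show 2 ≤ 10 by norm_num),
    qTheta_pow_eq_qPochhammer_mul hq₀ (show 4 ≤ 10 by norm_num)]
  simp only [Fin.prod_univ_succ, Fin.val_zero, Fin.val_succ, univ_eq_empty, prod_empty]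
  norm_num only
  ring

lemma eulerE_pow_five_sq (hq₀ : q ≠ 0) (hq : |q| < 1) :
    eulerE (q ^ 5) ^ 2 = qTheta (q ^ 5) (q ^ 10) * eulerE (q ^ 10) ^ 2 := by
  rw [eulerE_pow_eq_prod_residues hq 5 2, eulerE_eq_qPochhammer,
    qTheta_pow_eq_qPochhammer_mul hq₀ (show 5 ≤ 10 by norm_num)]
  simp only [Fin.prod_univ_succ, Fin.val_zero, Fin.val_succ, univ_eq_empty, prod_empty]
  norm_num only
  ring

lemma ramK_eq_qTheta (hq₀ : q ≠ 0) (hq : |q| < 1) :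
    ramK q = q * (qTheta q (q ^ 10) * qTheta (q ^ 2) (q ^ 10)) /
      (qTheta (q ^ 3) (q ^ 10) * qTheta (q ^ 4) (q ^ 10)) := by
  have hbase : ‖q ^ 10‖ < 1 := norm_pow_lt_one hq (by norm_num)
  have hθ (i : ℕ) (hi : i ≤ 10) : HasProd
      (fun j : ℕ ↦ (1 - q ^ (10 * j + i)) * (1 - q ^ (10 * j + (10 - i))))
      (qTheta (q ^ i) (q ^ 10)) := by
    simpa only [qTheta_pow_eq_qPochhammer_mul hq₀ hi, ← pow_mul, ← pow_add, add_comm] using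
      (hasProd_qPochhammer (q ^ i) hbase).mul (hasProd_qPochhammer (q ^ (10 - i)) hbase)
  have hdenom := mul_ne_zero (qTheta_pow_ne_zero hq₀ hq three_ne_zero (show 3 < 10 by norm_num))
    (qTheta_pow_ne_zero hq₀ hq four_ne_zero (show 4 < 10 by norm_num))
  have hprod := ((hθ 1 (by norm_num)).mul (hθ 2 (by norm_num))).div₀
    ((hθ 3 (by norm_num)).mul (hθ 4 (by norm_num))) hdenom
  rw [pow_one] at hprod
  rw [ramK, mul_div_assoc, ← hprod.tprod_eq]
  congr 1
  refine tprod_congr fun j ↦ ?_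
  norm_num only
  ring

lemma one_sub_ramK_sq (hq₀ : q ≠ 0) (hq : |q| < 1) :
    1 - ramK q ^ 2 = qTheta (q ^ 5) (q ^ 10) ^ 2 * qTheta (q ^ 2) (q ^ 10) /
      (qTheta (q ^ 3) (q ^ 10) ^ 2 * qTheta (q ^ 4) (q ^ 10)) := by
  have hθ₃ := qTheta_pow_ne_zero hq₀ hq three_ne_zero (show 3 < 10 by norm_num)
  have hθ₄ := qTheta_pow_ne_zero hq₀ hq four_ne_zero (show 4 < 10 by norm_num)
  rw [ramK_eq_qTheta hq₀ hq]
  field_simp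
  linear_combination qTheta_level_ten_relation hq₀ hq

lemma one_sub_ramK_sq_ne_zero (hq₀ : q ≠ 0) (hq : |q| < 1) : 1 - ramK q ^ 2 ≠ 0 := by
  have hθ {i : ℕ} (hi₀ : i ≠ 0) (hi : i < 10) := qTheta_pow_ne_zero hq₀ hq hi₀ hi
  rw [one_sub_ramK_sq hq₀ hq]
  exact div_ne_zero
    (mul_ne_zero (pow_ne_zero 2 (hθ (by norm_num) (by norm_num))) (hθ two_ne_zero (by norm_num)))
    (mul_ne_zero (pow_ne_zero 2 (hθ three_ne_zero (by norm_num))) (hθ four_ne_zero (by norm_num)))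

theorem ramK_div_one_sub_ramK_sq (hq₀ : q ≠ 0) (hq : |q| < 1) :
    ramK q / (1 - ramK q ^ 2) =
      q * eulerE q * eulerE (q ^ 10) ^ 5 / (eulerE (q ^ 2) * eulerE (q ^ 5) ^ 5) := by
  have hθ {i : ℕ} (hi₀ : i ≠ 0) (hi : i < 10) := qTheta_pow_ne_zero hq₀ hq hi₀ hi
  have hθ₂ := hθ two_ne_zero (by norm_num)
  have hθ₃ := hθ three_ne_zero (by norm_num)
  have hθ₄ := hθ four_ne_zero (by norm_num)
  have hθ₅ := hθ (show 5 ≠ 0 by norm_num) (by norm_num)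
  have hE₅ := eulerE_pow_ne_zero hq (show 5 ≠ 0 by norm_num)
  rw [one_sub_ramK_sq hq₀ hq, ramK_eq_qTheta hq₀ hq, eulerE_sq_eq_prod_qTheta hq₀ hq,
    eulerE_eq_prod_qTheta hq₀ hq]
  field_simp
  linear_combination qTheta q (q ^ 10) *
    (eulerE (q ^ 5) ^ 2 + qTheta (q ^ 5) (q ^ 10) * eulerE (q ^ 10) ^ 2) * eulerE_pow_five_sq hq₀ hq

lemma hasDerivAt_quarter_mul_one_add_sq_div_one_sub_sq {k : ℝ → ℝ} {k' : ℝ}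
    (hk : HasDerivAt k k' q) (hne : 1 - k q ^ 2 ≠ 0) :
    HasDerivAt (fun x : ℝ ↦ (1 / 4) * ((1 + k x ^ 2) / (1 - k x ^ 2)))
      (k q * k' / (1 - k q ^ 2) ^ 2) q := by
  refine ((((hk.pow 2).const_add 1).div ((hk.pow 2).const_sub 1) hne).const_mul
    (1 / 4)).congr_deriv ?_
  simp only [Pi.pow_apply]
  field_simp
  ring

theorem stmt_12_general (q : ℝ) (hq : |q| < 1) :
    HasDerivAt (fun x : ℝ => (1 / 4) * ((1 + ramK x ^ 2) / (1 - ramK x ^ 2)))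
      (q * eulerE q ^ 3 * eulerE (q ^ 10) ^ 8 / eulerE (q ^ 5) ^ 7) q := by
  have hk := hasDerivAt_ramK hq
  have hk_eq := ramK_eq_mul_exp hq
  set P := exp (∑' n, ramKExponent n * log (1 - q ^ n))
  rcases eq_or_ne q 0 with rfl | hq₀
  · simpa [hk_eq] using hasDerivAt_quarter_mul_one_add_sq_div_one_sub_sq hk (by simp [hk_eq])
  have hE₂ := eulerE_pow_ne_zero hq two_ne_zero
  have hE₅ := eulerE_pow_ne_zero hq (show 5 ≠ 0 by norm_num)
  have hE₁₀ := eulerE_pow_ne_zero hq (show 10 ≠ 0 by norm_num)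
  have hne := one_sub_ramK_sq_ne_zero hq₀ hq
  have hlambert : ramKLambert q =
      eulerE q * eulerE (q ^ 2) ^ 2 * eulerE (q ^ 5) ^ 3 / eulerE (q ^ 10) ^ 2 :=
    eq_div_of_mul_eq (pow_ne_zero 2 hE₁₀) (ramKLambert_mul_eulerE_sq hq₀ hq)
  refine (hasDerivAt_quarter_mul_one_add_sq_div_one_sub_sq hk hne).congr_deriv ?_
  calc ramK q * (P * ramKLambert q) / (1 - ramK q ^ 2) ^ 2
      = (ramK q / (1 - ramK q ^ 2)) ^ 2 * (ramKLambert q / q) := by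
        rw [div_pow, hk_eq]
        field_simp
    _ = q * eulerE q ^ 3 * eulerE (q ^ 10) ^ 8 / eulerE (q ^ 5) ^ 7 := by
        rw [ramK_div_one_sub_ramK_sq hq₀ hq, hlambert]
        field_simp

end LevelTen

theorem stmt_12 (q : ℝ) (hq0 : 0 < q) (hq1 : q < 1) :
    HasDerivAt (fun x : ℝ => (1 / 4) * ((1 + ramK x ^ 2) / (1 - ramK x ^ 2)))
      (q * eulerE q ^ 3 * eulerE (q ^ 10) ^ 8 / eulerE (q ^ 5) ^ 7) q :=
  stmt_12_general q (by rwa [abs_of_pos hq0])
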